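/- Let μ₁, μ₂ > 0 and 0 < ε < min(μ₁, μ₂). With z₁ ~ N(μ₁√E,1), z₂ ~ N(μ₂√E,1) independent, the probability Λ₁(E) = P(z₁+z₂>0, z₁>0, z₂<0) satisfies the lower bound Λ₁(E) ≥ (1 − Q(ε√(2E)))·(Q(μ₂√(2E)) − Q((μ₂+μ₁−ε)√(2E))), where Q(x) = P(Z > x) for a standard normal Z (so Q(x√2) = P(N(m,1/2)-type tail); here Q(a) = ∫_a^∞ (1/√(2π)) e^{−u²/2} du). -/

import Mathlib

open MeasureTheory ProbabilityTheory

/-- The standard Gaussian tail function `Q(x) = ∫_x^∞ (1/√(2π)) e^{-u²/2} du`. -/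
noncomputable def gaussQ (x : ℝ) : ℝ :=
  ∫ u in Set.Ioi x, (1 / Real.sqrt (2 * Real.pi)) * Real.exp (-u ^ 2 / 2)

/-- The standard normal density. -/
noncomputable def gphi (u : ℝ) : ℝ := (1 / Real.sqrt (2 * Real.pi)) * Real.exp (-u ^ 2 / 2)

lemma gphi_eq_pdf : gphi = gaussianPDFReal 0 1 := by
  ext u
  simp [gphi, gaussianPDFReal]

lemma gphi_pos (u : ℝ) : 0 < gphi u := by unfold gphi; positivity

lemma gphi_integrable : Integrable gphi := by
  rw [gphi_eq_pdf]; exact integrable_gaussianPDFReal 0 1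

lemma gphi_continuous : Continuous gphi := by unfold gphi; fun_prop

lemma gphi_hasDerivAt (x : ℝ) : HasDerivAt gphi (-x * gphi x) x := by
  unfold gphi
  have h : HasDerivAt (fun u : ℝ => -u ^ 2 / 2) (-x) x := by
    have := ((hasDerivAt_pow 2 x).neg).div_const 2
    exact this.congr_deriv (by norm_num; ring)
  exact ((h.exp).const_mul (1 / Real.sqrt (2 * Real.pi))).congr_deriv (by ring)

lemma gaussQ_eq (x : ℝ) : gaussQ x = ∫ u in Set.Ioi x, gphi u := rfl

lemma gaussQ_eq_measure (x : ℝ) : gaussQ x = (gaussianReal 0 1).real (Set.Ioi x) := by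
  rw [Measure.real, gaussianReal_apply_eq_integral 0 one_ne_zero, ENNReal.toReal_ofReal, gaussQ_eq,
    gphi_eq_pdf]
  exact integral_nonneg fun u => gaussianPDFReal_nonneg 0 1 u

lemma gaussQ_hasDerivAt (x : ℝ) : HasDerivAt gaussQ (-gphi x) x := by
  have h : gaussQ = fun y => gaussQ 0 - ∫ u in (0:ℝ)..y, gphi u := by
    ext y
    have := intervalIntegral.integral_interval_add_Ioi (a := (0:ℝ)) (b := y) (f := gphi) (μ := volume)
      gphi_integrable.integrableOn gphi_integrable.integrableOn
    rw [gaussQ_eq, gaussQ_eq]; linarith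
  rw [h]
  exact (gphi_continuous.integral_hasStrictDerivAt 0 x).hasDerivAt.const_sub _

lemma gaussQ_tendsto : Filter.Tendsto gaussQ Filter.atTop (nhds 0) := by
  have h : gaussQ = fun y => gaussQ 0 - ∫ u in (0:ℝ)..y, gphi u := by
    ext y
    have := intervalIntegral.integral_interval_add_Ioi (a := (0:ℝ)) (b := y) (f := gphi) (μ := volume)
      gphi_integrable.integrableOn gphi_integrable.integrableOn
    rw [gaussQ_eq, gaussQ_eq]; linarith
  have h2 := intervalIntegral_tendsto_integral_Ioi (0:ℝ) (f := gphi) (μ := volume)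
      gphi_integrable.integrableOn Filter.tendsto_id
  have h3 := h2.const_sub (gaussQ 0)
  rw [← gaussQ_eq, sub_self] at h3
  rw [h]
  exact h3

lemma gaussQ_strictAnti : StrictAnti gaussQ :=
  strictAnti_of_deriv_neg fun x => by rw [(gaussQ_hasDerivAt x).deriv]; linarith [gphi_pos x]

lemma gaussQ_pos (x : ℝ) : 0 < gaussQ x := by
  have h1 : 0 ≤ gaussQ (x + 1) := by rw [gaussQ_eq_measure]; positivity
  have := gaussQ_strictAnti (show x < x + 1 by linarith)
  linarith

lemma gauss_real_Ioi (m x : ℝ) : (gaussianReal m 1).real (Set.Ioi x) = gaussQ (x - m) := by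
  have h := gaussianReal_map_add_const (μ := 0) (v := 1) m
  rw [zero_add] at h
  rw [← h, map_measureReal_apply (by fun_prop) measurableSet_Ioi, gaussQ_eq_measure]
  congr 1
  ext u; simp [sub_lt_iff_lt_add]

lemma gauss_real_Iio (m x : ℝ) : (gaussianReal m 1).real (Set.Iio x) = gaussQ (m - x) := by
  have h := gaussianReal_map_neg (μ := -m) (v := 1)
  rw [neg_neg] at h
  rw [← h, map_measureReal_apply (by fun_prop) measurableSet_Iio]
  have : (fun u : ℝ => -u) ⁻¹' Set.Iio x = Set.Ioi (-x) := by
    ext u; simp only [Set.mem_preimage, Set.mem_Iio, Set.mem_Ioi]; constructor <;> intro h <;> linarith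
  rw [this, gauss_real_Ioi]; congr 1; ring

lemma gauss_real_Iic (m x : ℝ) : (gaussianReal m 1).real (Set.Iic x) = gaussQ (m - x) := by
  rw [← gauss_real_Iio]
  have := nullSingletonClass_gaussianReal (μ := m) (v := 1) one_ne_zero
  exact measureReal_congr Iio_ae_eq_Iic.symm

lemma gaussQ_neg (x : ℝ) : gaussQ (-x) = 1 - gaussQ x := by
  have h1 := gauss_real_Iic 0 x
  have h2 := gauss_real_Ioi 0 x
  have h3 := probReal_compl_eq_one_sub (μ := gaussianReal 0 1) (measurableSet_Ioi (a := x))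
  rw [Set.compl_Ioi, h1, h2] at h3
  simpa using h3

lemma gaussQ_zero : gaussQ 0 = 1 / 2 := by
  have := gaussQ_neg 0
  rw [neg_zero] at this; linarith

/-- Scaling. -/
lemma gauss_real_Ioi_two (m : ℝ) : (gaussianReal m 2).real (Set.Ioi 0) = gaussQ (-(m / Real.sqrt 2)) := by
  have h := gaussianReal_map_const_mul (μ := m / Real.sqrt 2) (v := 1) (Real.sqrt 2)
  have h2 : gaussianReal (Real.sqrt 2 * (m / Real.sqrt 2))
      (NNReal.mk (Real.sqrt 2 ^ 2) (sq_nonneg _) * 1) = gaussianReal m 2 := by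
    congr 1
    · field_simp
    · ext
      rw [mul_one]
      exact Real.sq_sqrt (by norm_num)
  rw [h2] at h
  rw [← h, map_measureReal_apply (by fun_prop) measurableSet_Ioi]
  have : (fun u : ℝ => Real.sqrt 2 * u) ⁻¹' Set.Ioi 0 = Set.Ioi 0 := by
    ext u; simp
  have h3 : ((Real.sqrt 2 * ·) ⁻¹' Set.Ioi (0:ℝ)) = Set.Ioi 0 := this
  rw [h3, gauss_real_Ioi]; congr 1; ring

/-- If a function is eventually antitone towards `0`, it is nonnegative. -/
lemma nonneg_of_antitone_tendsto {f : ℝ → ℝ} {a : ℝ} (hf : AntitoneOn f (Set.Ici a))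
    (ht : Filter.Tendsto f Filter.atTop (nhds 0)) {x : ℝ} (hx : a ≤ x) : 0 ≤ f x := by
  refine le_of_tendsto ht ?_
  filter_upwards [Filter.eventually_ge_atTop x] with y hy
  exact hf hx (hx.trans hy) hy

lemma gphi_tendsto : Filter.Tendsto gphi Filter.atTop (nhds 0) := by
  have h : Filter.Tendsto (fun u : ℝ => -u ^ 2 / 2) Filter.atTop Filter.atBot := by
    have : (fun u : ℝ => -u ^ 2 / 2) = fun u : ℝ => -(u ^ 2 * (1/2)) := by ext; ring
    rw [this]
    exact Filter.tendsto_neg_atTop_atBot.comp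
      ((Filter.tendsto_pow_atTop two_ne_zero).atTop_mul_const (by norm_num))
  have := (Real.tendsto_exp_atBot.comp h).const_mul (1 / Real.sqrt (2 * Real.pi))
  rw [mul_zero] at this
  exact this

/-- Mills' inequality. -/
lemma mills (x : ℝ) : x * gaussQ x ≤ gphi x := by
  rcases le_or_gt x 0 with hx | hx
  · have := gaussQ_pos x; have := gphi_pos x; nlinarith
  have hd : ∀ y, 0 < y → HasDerivAt (fun y => gphi y / y - gaussQ y) (-(gphi y / y ^ 2)) y := by
    intro y hy
    refine (((gphi_hasDerivAt y).div (hasDerivAt_id y) hy.ne').sub (gaussQ_hasDerivAt y)).congr_deriv ?_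
    simp only [id]
    field_simp
    ring
  have hanti : AntitoneOn (fun y => gphi y / y - gaussQ y) (Set.Ici x) := by
    apply antitoneOn_of_deriv_nonpos (convex_Ici x)
    · intro y hy
      exact (hd y (hx.trans_le hy)).continuousAt.continuousWithinAt
    · intro y hy
      rw [interior_Ici] at hy
      exact (hd y (hx.trans hy)).differentiableAt.differentiableWithinAt
    · intro y hy
      rw [interior_Ici] at hy
      rw [(hd y (hx.trans hy)).deriv]
      have := gphi_pos y
      have : 0 ≤ gphi y / y ^ 2 := by positivity
      linarith
  have ht : Filter.Tendsto (fun y => gphi y / y - gaussQ y) Filter.atTop (nhds 0) := by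
    have := (gphi_tendsto.div_atTop Filter.tendsto_id).sub gaussQ_tendsto
    simpa using this
  have := nonneg_of_antitone_tendsto hanti ht le_rfl
  have h2 : gaussQ x ≤ gphi x / x := by linarith
  rw [le_div_iff₀ hx] at h2
  linarith

lemma hazard_mono : Monotone (fun x => gphi x / gaussQ x) := by
  have hd : ∀ x, HasDerivAt (fun x => gphi x / gaussQ x)
      ((-x * gphi x * gaussQ x - gphi x * (-gphi x)) / gaussQ x ^ 2) x := fun x =>
    (gphi_hasDerivAt x).div (gaussQ_hasDerivAt x) (gaussQ_pos x).ne'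
  apply monotone_of_deriv_nonneg (fun x => (hd x).differentiableAt)
  intro x
  rw [(hd x).deriv]
  have h1 := mills x
  have h2 := gphi_pos x
  apply div_nonneg _ (sq_nonneg _)
  nlinarith

/-- Log-concavity of the tail. -/
lemma gaussQ_logconcave {s t d : ℝ} (hst : s ≤ t) (hd : 0 ≤ d) :
    gaussQ (t + d) * gaussQ s ≤ gaussQ (s + d) * gaussQ t := by
  have hD : ∀ x, HasDerivAt (fun x => gaussQ (x + d) / gaussQ x)
      ((-gphi (x + d) * gaussQ x - gaussQ (x + d) * (-gphi x)) / gaussQ x ^ 2) x := fun x =>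
    ((gaussQ_hasDerivAt (x + d)).comp_add_const x d).div (gaussQ_hasDerivAt x) (gaussQ_pos x).ne'
  have hanti : Antitone (fun x => gaussQ (x + d) / gaussQ x) := by
    apply antitone_of_deriv_nonpos (fun x => (hD x).differentiableAt)
    intro x
    rw [(hD x).deriv]
    apply div_nonpos_of_nonpos_of_nonneg _ (sq_nonneg _)
    have := hazard_mono (show x ≤ x + d by linarith)
    simp only at this
    rw [div_le_div_iff₀ (gaussQ_pos _) (gaussQ_pos _)] at this
    linarith
  have := hanti hst
  simp only at this
  rwa [div_le_div_iff₀ (gaussQ_pos _) (gaussQ_pos _)] at this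

lemma gaussPhi_mid_aux {w c : ℝ} (h : w ≤ c) :
    gaussQ (-w) * gaussQ (-c) ≤ gaussQ (-((w + c) / 2)) ^ 2 := by
  have := gaussQ_logconcave (s := -c) (t := -((w + c) / 2)) (d := (c - w) / 2)
    (by linarith) (by linarith)
  rw [show -((w + c) / 2) + (c - w) / 2 = -w by ring,
    show -c + (c - w) / 2 = -((w + c) / 2) by ring] at this
  linarith [sq (gaussQ (-((w + c) / 2)))]

lemma gaussPhi_mid (w c : ℝ) :
    gaussQ (-w) * gaussQ (-c) ≤ gaussQ (-((w + c) / 2)) ^ 2 := by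
  rcases le_total w c with h | h
  · exact gaussPhi_mid_aux h
  · have := gaussPhi_mid_aux h
    rw [add_comm w c]; linarith

lemma sector_rot (a : ℝ) :
    ((gaussianReal a 1).prod (gaussianReal 0 1)).real {z : ℝ × ℝ | 0 < z.1 + z.2 ∧ 0 < z.1 - z.2}
      = gaussQ (-(a / Real.sqrt 2)) ^ 2 := by
  set P := (gaussianReal a 1).prod (gaussianReal 0 1) with hP
  have hi : IndepFun (fun z : ℝ × ℝ => z.1) (fun z : ℝ × ℝ => z.2) P :=
    indepFun_prod (X := fun x : ℝ => x) (Y := fun x : ℝ => x) measurable_id measurable_id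
  have hl1 : P.map (fun z : ℝ × ℝ => z.1) = gaussianReal a 1 := by
    have : P.map Prod.fst = gaussianReal a 1 := by rw [hP, Measure.map_fst_prod]; simp
    exact this
  have hl2 : P.map (fun z : ℝ × ℝ => z.2) = gaussianReal 0 1 := by
    have : P.map Prod.snd = gaussianReal 0 1 := by rw [hP, Measure.map_snd_prod]; simp
    exact this
  have hG1 : HasGaussianLaw (fun z : ℝ × ℝ => z.1) P := ⟨by rw [hl1]; infer_instance⟩
  have hG2 : HasGaussianLaw (fun z : ℝ × ℝ => z.2) P := ⟨by rw [hl2]; infer_instance⟩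
  have hG : HasGaussianLaw (fun z : ℝ × ℝ => (z.1, z.2)) P := hi.hasGaussianLaw hG1 hG2
  have hGG : HasGaussianLaw (fun z : ℝ × ℝ => (z.1 + z.2, z.1 - z.2)) P :=
    hG.map_fun ((ContinuousLinearMap.fst ℝ ℝ ℝ + ContinuousLinearMap.snd ℝ ℝ ℝ).prod
      (ContinuousLinearMap.fst ℝ ℝ ℝ - ContinuousLinearMap.snd ℝ ℝ ℝ))
  have hm1 := hG1.memLp_two
  have hm2 := hG2.memLp_two
  have hv1 : Var[fun z : ℝ × ℝ => z.1; P] = 1 := by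
    have := variance_map (μ := P) (X := fun x : ℝ => x) (Y := fun z : ℝ × ℝ => z.1)
      (by fun_prop) (by fun_prop)
    rw [hl1, variance_fun_id_gaussianReal] at this
    simpa [Function.comp_def] using this.symm
  have hv2 : Var[fun z : ℝ × ℝ => z.2; P] = 1 := by
    have := variance_map (μ := P) (X := fun x : ℝ => x) (Y := fun z : ℝ × ℝ => z.2)
      (by fun_prop) (by fun_prop)
    rw [hl2, variance_fun_id_gaussianReal] at this
    simpa [Function.comp_def] using this.symm
  have hcov : cov[fun z : ℝ × ℝ => z.1 + z.2, fun z => z.1 - z.2; P] = 0 := by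
    have hadd : cov[fun z : ℝ × ℝ => z.1 + z.2, fun z => z.1 - z.2; P] =
        cov[fun z : ℝ × ℝ => z.1, fun z => z.1 - z.2; P] +
        cov[fun z : ℝ × ℝ => z.2, fun z => z.1 - z.2; P] :=
      covariance_add_left hm1 hm2 (hm1.sub hm2)
    rw [hadd, covariance_fun_sub_right hm1 hm1 hm2,
      covariance_fun_sub_right hm2 hm1 hm2, covariance_self (by fun_prop),
      covariance_self (by fun_prop), hv1, hv2, covariance_comm]
    ring
  have hind := hGG.indepFun_of_covariance_eq_zero hcov
  have hladd : P.map (fun z : ℝ × ℝ => z.1 + z.2) = gaussianReal a 2 := by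
    have := gaussianReal_add_gaussianReal_of_indepFun hi hl1 hl2
    rw [add_zero, one_add_one_eq_two] at this
    exact this
  have hlsub : P.map (fun z : ℝ × ℝ => z.1 - z.2) = gaussianReal a 2 := by
    have hl3 : P.map (fun z : ℝ × ℝ => -z.2) = gaussianReal 0 1 := by
      have h := gaussianReal_map_neg (μ := 0) (v := 1)
      rw [neg_zero, ← hl2, Measure.map_map (by fun_prop) (by fun_prop)] at h
      rw [hl2] at h; exact h
    have hi3 : IndepFun (fun z : ℝ × ℝ => z.1) (fun z : ℝ × ℝ => -z.2) P :=
      hi.comp measurable_id measurable_neg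
    have := gaussianReal_add_gaussianReal_of_indepFun hi3 hl1 hl3
    rw [add_zero, one_add_one_eq_two] at this
    rw [← this]; congr 1
  have h := hind.measure_inter_preimage_eq_mul (Set.Ioi 0) (Set.Ioi 0) measurableSet_Ioi
    measurableSet_Ioi
  have hset : {z : ℝ × ℝ | 0 < z.1 + z.2 ∧ 0 < z.1 - z.2} =
    (fun z : ℝ × ℝ => z.1 + z.2) ⁻¹' Set.Ioi 0 ∩ (fun z : ℝ × ℝ => z.1 - z.2) ⁻¹' Set.Ioi 0 := rfl
  rw [hset, Measure.real, h, ENNReal.toReal_mul, ← Measure.map_apply (by fun_prop) measurableSet_Ioi,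
    ← Measure.map_apply (by fun_prop) measurableSet_Ioi, hladd, hlsub, sq, ← gauss_real_Ioi_two]
  rfl

lemma slice_bound (b s : ℝ) (hb : 0 ≤ b) (hs : 0 < s) :
    gaussQ b * (gaussianReal 0 1).real (Set.Ioo (-s) s) ≤
      (gaussianReal b 1).real (Set.Ioo (-s) 0) := by
  have h1 : (gaussianReal 0 1).real (Set.Ioo (-s) s) ≤ 1 - 2 * gaussQ s := by
    have hd : Set.Ioo (-s) s ⊆ Set.Iio s \ Set.Iic (-s) := by
      intro u hu; exact ⟨hu.2, not_le.mpr hu.1⟩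
    have h := measureReal_mono (μ := gaussianReal 0 1) hd
    rw [measureReal_sdiff (by intro u hu; simp at *; linarith) measurableSet_Iic,
      gauss_real_Iio, gauss_real_Iic, zero_sub, gaussQ_neg] at h
    simp at h; linarith
  have h2 : gaussQ b - gaussQ (b + s) ≤ (gaussianReal b 1).real (Set.Ioo (-s) 0) := by
    have hd : Set.Iio 0 \ Set.Iic (-s) ⊆ Set.Ioo (-s) 0 := by
      intro u hu; exact ⟨not_le.mp hu.2, hu.1⟩
    have h := measureReal_mono (μ := gaussianReal b 1) hd
    rw [measureReal_sdiff (by intro u hu; simp at *; linarith) measurableSet_Iic,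
      gauss_real_Iio, gauss_real_Iic] at h
    simpa using h
  have h3 := gaussQ_logconcave (s := 0) (t := s) (d := b) hs.le hb
  rw [gaussQ_zero, zero_add, add_comm s b] at h3
  have := gaussQ_pos b
  nlinarith

lemma lhs_bound (a b : ℝ) (hb : 0 ≤ b) :
    gaussQ b * gaussQ (-(a / Real.sqrt 2)) ^ 2 ≤
    (((gaussianReal a 1).prod (gaussianReal b 1))
        {z : ℝ × ℝ | z.1 + z.2 > 0 ∧ z.1 > 0 ∧ z.2 < 0}).toReal := by
  have hmS : MeasurableSet {z : ℝ × ℝ | z.1 + z.2 > 0 ∧ z.1 > 0 ∧ z.2 < 0} := by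
    measurability
  have hmT : MeasurableSet {z : ℝ × ℝ | 0 < z.1 + z.2 ∧ 0 < z.1 - z.2} := by
    measurability
  rw [← sector_rot, Measure.real, ← ENNReal.toReal_ofReal (gaussQ_pos b).le, ← ENNReal.toReal_mul]
  apply ENNReal.toReal_mono (measure_ne_top _ _)
  rw [Measure.prod_apply hmS, Measure.prod_apply hmT, ← lintegral_const_mul']
  swap
  · exact ENNReal.ofReal_ne_top
  apply lintegral_mono
  intro s
  simp only
  rcases le_or_gt s 0 with hs | hs
  · have : (Prod.mk s ⁻¹' {z : ℝ × ℝ | 0 < z.1 + z.2 ∧ 0 < z.1 - z.2}) = ∅ := by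
      ext u; simp; intro h; linarith
    rw [this]; simp
  · have e1 : (Prod.mk s ⁻¹' {z : ℝ × ℝ | 0 < z.1 + z.2 ∧ 0 < z.1 - z.2}) = Set.Ioo (-s) s := by
      ext u; simp; intro h; constructor <;> intro h <;> linarith
    have e2 : (Prod.mk s ⁻¹' {z : ℝ × ℝ | z.1 + z.2 > 0 ∧ z.1 > 0 ∧ z.2 < 0}) = Set.Ioo (-s) 0 := by
      ext u; simp [hs]; intro h; constructor <;> intro h <;> linarith
    rw [e1, e2]
    have := slice_bound b s hb hs
    rw [← ENNReal.toReal_le_toReal (ENNReal.mul_ne_top ENNReal.ofReal_ne_top (measure_ne_top _ _))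
      (measure_ne_top _ _), ENNReal.toReal_mul, ENNReal.toReal_ofReal (gaussQ_pos b).le]
    exact this

lemma gphi_zero_ge : 0.395 ≤ gphi 0 := by
  have h1 : Real.sqrt (2 * Real.pi) ≤ 2.53 := by
    apply Real.sqrt_le_iff.mpr ⟨by norm_num, ?_⟩
    have := Real.pi_lt_d4
    norm_num at *; linarith
  have h2 : 0 < Real.sqrt (2 * Real.pi) := by positivity
  have h3 : gphi 0 = 1 / Real.sqrt (2 * Real.pi) := by simp [gphi]
  rw [h3, le_div_iff₀ h2]
  nlinarith

lemma hazard_lb {x : ℝ} (hx : 0 ≤ x) : (0.79 + 0.62 * x) * gaussQ x ≤ gphi x := by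
  have hd : ∀ y, 0 ≤ y → HasDerivAt (fun y => gphi y / (0.79 + 0.62 * y) - gaussQ y)
      (gphi y * (0.0041 + 0.1896 * y - 0.2356 * y ^ 2) / (0.79 + 0.62 * y) ^ 2) y := by
    intro y hy
    have hp : (0.79 + 0.62 * y) ≠ 0 := by positivity
    have hl : HasDerivAt (fun y : ℝ => 0.79 + 0.62 * y) 0.62 y := by
      have := ((hasDerivAt_id y).const_mul (0.62:ℝ)).const_add 0.79
      exact this.congr_deriv (by norm_num)
    refine (((gphi_hasDerivAt y).div hl hp).sub (gaussQ_hasDerivAt y)).congr_deriv ?_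
    field_simp
    ring
  have key : 0 ≤ gphi x / (0.79 + 0.62 * x) - gaussQ x := by
    rcases le_or_gt 0 (0.0041 + 0.1896 * x - 0.2356 * x ^ 2) with hp | hp
    · have hmono : MonotoneOn (fun y => gphi y / (0.79 + 0.62 * y) - gaussQ y) (Set.Icc 0 x) := by
        apply monotoneOn_of_deriv_nonneg (convex_Icc 0 x)
        · intro y hy
          exact (hd y hy.1).continuousAt.continuousWithinAt
        · intro y hy
          rw [interior_Icc] at hy
          exact (hd y hy.1.le).differentiableAt.differentiableWithinAt
        · intro y hy
          rw [interior_Icc] at hy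
          rw [(hd y hy.1.le).deriv]
          have h1 := gphi_pos y
          have h2 : 0 ≤ 0.0041 + 0.1896 * y - 0.2356 * y ^ 2 := by
            have := hy.1; have := hy.2
            by_contra hc
            push Not at hc
            nlinarith [mul_pos hy.1 (sub_pos.mpr hy.2), mul_nonneg hy.1.le hp]
          positivity
      have h := hmono (Set.left_mem_Icc.mpr hx) (Set.right_mem_Icc.mpr hx) hx
      have h0 := gphi_zero_ge
      simp only [gaussQ_zero, mul_zero, add_zero] at h
      have : (1:ℝ)/2 ≤ gphi 0 / 0.79 := by
        rw [le_div_iff₀ (by norm_num)]; norm_num at *; linarith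
      linarith
    · have hanti : AntitoneOn (fun y => gphi y / (0.79 + 0.62 * y) - gaussQ y) (Set.Ici x) := by
        apply antitoneOn_of_deriv_nonpos (convex_Ici x)
        · intro y hy
          exact (hd y (hx.trans hy)).continuousAt.continuousWithinAt
        · intro y hy
          rw [interior_Ici] at hy
          exact (hd y (hx.trans (le_of_lt hy))).differentiableAt.differentiableWithinAt
        · intro y hy
          rw [interior_Ici, Set.mem_Ioi] at hy
          rw [(hd y (hx.trans hy.le)).deriv]
          have h1 := gphi_pos y
          have h2 : 0.0041 + 0.1896 * y - 0.2356 * y ^ 2 ≤ 0 := by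
            by_contra hc
            push Not at hc
            nlinarith [mul_nonneg hx (sub_pos.mpr hy).le, mul_nonneg hx hc.le]
          apply div_nonpos_of_nonpos_of_nonneg _ (sq_nonneg _)
          nlinarith
      have ht : Filter.Tendsto (fun y => gphi y / (0.79 + 0.62 * y) - gaussQ y)
          Filter.atTop (nhds 0) := by
        have hl : Filter.Tendsto (fun y : ℝ => 0.79 + 0.62 * y) Filter.atTop Filter.atTop :=
          Filter.tendsto_atTop_add_const_left _ _
            (Filter.tendsto_id.const_mul_atTop (by norm_num))
        have := (gphi_tendsto.div_atTop hl).sub gaussQ_tendsto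
        simpa using this
      exact nonneg_of_antitone_tendsto hanti ht le_rfl
  have hp : 0 < 0.79 + 0.62 * x := by positivity
  have h2 : gaussQ x ≤ gphi x / (0.79 + 0.62 * x) := by linarith
  rw [le_div_iff₀ hp] at h2
  linarith

lemma gaussQ_exp_anti :
    AntitoneOn (fun x => gaussQ x * Real.exp (0.79 * x + 0.31 * x ^ 2)) (Set.Ici 0) := by
  have hd : ∀ x, HasDerivAt (fun x => gaussQ x * Real.exp (0.79 * x + 0.31 * x ^ 2))
      (-(gphi x - (0.79 + 0.62 * x) * gaussQ x) * Real.exp (0.79 * x + 0.31 * x ^ 2)) x := by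
    intro x
    have hl : HasDerivAt (fun x : ℝ => 0.79 * x + 0.31 * x ^ 2) (0.79 + 0.62 * x) x := by
      have := ((hasDerivAt_id x).const_mul (0.79:ℝ)).add ((hasDerivAt_pow 2 x).const_mul (0.31:ℝ))
      exact this.congr_deriv (by norm_num; ring)
    exact ((gaussQ_hasDerivAt x).mul hl.exp).congr_deriv (by ring)
  apply antitoneOn_of_deriv_nonpos (convex_Ici 0)
  · intro y hy
    exact (hd y).continuousAt.continuousWithinAt
  · intro y hy
    exact (hd y).differentiableAt.differentiableWithinAt
  · intro y hy
    rw [interior_Ici, Set.mem_Ioi] at hy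
    rw [(hd y).deriv]
    have := hazard_lb hy.le
    have := Real.exp_pos (0.79 * y + 0.31 * y ^ 2)
    nlinarith

lemma gaussQ_le_exp {x : ℝ} (hx : 0 ≤ x) :
    gaussQ x ≤ 1 / 2 * Real.exp (-(0.79 * x + 0.31 * x ^ 2)) := by
  have h := gaussQ_exp_anti (Set.mem_Ici.mpr le_rfl) (Set.mem_Ici.mpr hx) hx
  simp only [gaussQ_zero] at h
  norm_num at h
  rw [Real.exp_neg, ← div_eq_mul_inv, le_div_iff₀ (Real.exp_pos _)]
  norm_num
  exact h

lemma gaussQ_sqrt_two {b : ℝ} (hb : 0 ≤ b) :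
    gaussQ (Real.sqrt 2 * b) ≤ gaussQ b * Real.exp (-(0.3272 * b + 0.31 * b ^ 2)) := by
  have hs : (1.4142:ℝ) ≤ Real.sqrt 2 := Real.le_sqrt_of_sq_le (by norm_num)
  have h2 : Real.sqrt 2 ^ 2 = 2 := Real.sq_sqrt (by norm_num)
  have hbb : b ≤ Real.sqrt 2 * b := by nlinarith
  have h := gaussQ_exp_anti (Set.mem_Ici.mpr hb) (Set.mem_Ici.mpr (hb.trans hbb)) hbb
  simp only at h
  rw [← le_div_iff₀ (Real.exp_pos _), mul_div_assoc, ← Real.exp_sub] at h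
  refine h.trans (mul_le_mul_of_nonneg_left (Real.exp_le_exp.mpr ?_) (gaussQ_pos b).le)
  rw [mul_pow, h2]
  nlinarith

/-- Combined criterion. -/
lemma key_of {b c1 : ℝ} (hb : 0 ≤ b) (hc1 : 0 ≤ c1)
    (hA : Real.exp (-(0.3272 * b + 0.31 * b ^ 2)) +
      1 / 2 * Real.exp (-(0.79 * c1 + 0.31 * c1 ^ 2)) ≤ 1)
    (hB : 1.41422 * (b * c1) ≤ 0.69314 + 0.79 * b - 0.69 * b ^ 2) {c : ℝ} (hc : 0 ≤ c) :
    gaussQ (Real.sqrt 2 * b) - gaussQ (Real.sqrt 2 * b + c) ≤ gaussQ b * gaussQ (-c) := by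
  have hQb := gaussQ_pos b
  have hbig : ∀ c, c1 ≤ c →
      gaussQ (Real.sqrt 2 * b) - gaussQ (Real.sqrt 2 * b + c) ≤ gaussQ b * gaussQ (-c) := by
    intro c hcc
    have h1 := gaussQ_sqrt_two hb
    have h2 := gaussQ_le_exp hc1
    have h3 : gaussQ (-c1) ≤ gaussQ (-c) := gaussQ_strictAnti.antitone (by linarith)
    rw [gaussQ_neg c1] at h3
    have h4 := gaussQ_pos (Real.sqrt 2 * b + c)
    have h5 : gaussQ b * Real.exp (-(0.3272 * b + 0.31 * b ^ 2)) ≤ gaussQ b * gaussQ (-c) :=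
      mul_le_mul_of_nonneg_left (by linarith) hQb.le
    linarith
  rcases le_total c1 c with h | h
  · exact hbig c h
  have hs2 : Real.sqrt 2 ≤ 1.41422 := Real.sqrt_le_iff.mpr ⟨by norm_num, by norm_num⟩
  have hsq : Real.sqrt 2 ^ 2 = 2 := Real.sq_sqrt (by norm_num)
  have hs0 : 0 ≤ Real.sqrt 2 := Real.sqrt_nonneg _
  have hBB : gaussQ b ≤ Real.exp (-b ^ 2 - Real.sqrt 2 * b * c1) := by
    refine (gaussQ_le_exp hb).trans ?_
    have hlog := Real.log_two_gt_d9
    have hh : (1:ℝ) / 2 = Real.exp (-Real.log 2) := by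
      rw [Real.exp_neg, Real.exp_log (by norm_num)]; norm_num
    rw [hh, ← Real.exp_add]
    apply Real.exp_le_exp.mpr
    have : Real.sqrt 2 * b * c1 ≤ 1.41422 * (b * c1) := by
      rw [mul_assoc]; exact mul_le_mul_of_nonneg_right hs2 (by positivity)
    norm_num at *
    linarith
  have hphi : ∀ t, gphi (Real.sqrt 2 * b + t) = gphi t * Real.exp (-b ^ 2 - Real.sqrt 2 * b * t) := by
    intro t
    unfold gphi
    rw [mul_assoc, ← Real.exp_add]
    congr 2
    linear_combination (-b ^ 2 / 2) * hsq
  have hd : ∀ t, HasDerivAt (fun t => gaussQ b * gaussQ (-t) + gaussQ (Real.sqrt 2 * b + t))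
      (gphi t * (gaussQ b - Real.exp (-b ^ 2 - Real.sqrt 2 * b * t))) t := by
    intro t
    have e : (fun t => gaussQ b * gaussQ (-t) + gaussQ (Real.sqrt 2 * b + t)) =
      fun t => gaussQ b * (1 - gaussQ t) + gaussQ (Real.sqrt 2 * b + t) := by
      ext t; rw [gaussQ_neg]
    rw [e]
    have h1 := ((gaussQ_hasDerivAt t).const_sub 1).const_mul (gaussQ b)
    have h2 := (gaussQ_hasDerivAt (Real.sqrt 2 * b + t)).comp_const_add (Real.sqrt 2 * b) t
    refine (h1.add h2).congr_deriv ?_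
    rw [hphi]; ring
  have hanti : AntitoneOn (fun t => gaussQ b * gaussQ (-t) + gaussQ (Real.sqrt 2 * b + t))
      (Set.Icc 0 c1) := by
    apply antitoneOn_of_deriv_nonpos (convex_Icc 0 c1)
    · intro y hy
      exact (hd y).continuousAt.continuousWithinAt
    · intro y hy
      exact (hd y).differentiableAt.differentiableWithinAt
    · intro y hy
      rw [interior_Icc] at hy
      rw [(hd y).deriv]
      have h1 := gphi_pos y
      have h2 : Real.exp (-b ^ 2 - Real.sqrt 2 * b * c1) ≤
          Real.exp (-b ^ 2 - Real.sqrt 2 * b * y) := by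
        apply Real.exp_le_exp.mpr
        have := mul_le_mul_of_nonneg_left hy.2.le (mul_nonneg hs0 hb)
        linarith
      nlinarith
  have h1 := hanti ⟨hc, h⟩ (Set.right_mem_Icc.mpr hc1) h
  have h2 := hbig c1 le_rfl
  simp only at h1
  linarith

lemma exp_neg_le {x y : ℝ} (n : ℕ) (hx : 0 ≤ x) (hxy : x ≤ y) :
    Real.exp (-y) ≤ 1 / (∑ i ∈ Finset.range (n + 1), x ^ i / (i.factorial : ℝ)) := by
  have h1 := Real.sum_le_exp_of_nonneg hx (n + 1)
  have hpos : 0 < ∑ i ∈ Finset.range (n + 1), x ^ i / (i.factorial : ℝ) := by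
    rw [Finset.sum_range_succ']
    have : 0 ≤ ∑ k ∈ Finset.range n, x ^ (k + 1) / ((k + 1).factorial : ℝ) :=
      Finset.sum_nonneg fun i _ => by positivity
    simp; linarith
  calc Real.exp (-y) ≤ Real.exp (-x) := Real.exp_le_exp.mpr (by linarith)
    _ = 1 / Real.exp x := by rw [Real.exp_neg, one_div]
    _ ≤ _ := one_div_le_one_div_of_le hpos h1

lemma key_step (b0 b1 c1 X Y : ℝ) (hb0 : 0 ≤ b0) (hc1 : 0 ≤ c1)
    (hX : X = 0.3272 * b0 + 0.31 * b0 ^ 2) (hY : Y = 0.79 * c1 + 0.31 * c1 ^ 2)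
    (hA : 1 / (∑ i ∈ Finset.range (6 + 1), X ^ i / (i.factorial : ℝ)) +
      1 / 2 * (1 / (∑ i ∈ Finset.range (6 + 1), Y ^ i / (i.factorial : ℝ))) ≤ 1)
    (hB0 : 1.41422 * (b0 * c1) ≤ 0.69314 + 0.79 * b0 - 0.69 * b0 ^ 2)
    (hB1 : 1.41422 * (b1 * c1) ≤ 0.69314 + 0.79 * b1 - 0.69 * b1 ^ 2)
    {b c : ℝ} (h0 : b0 ≤ b) (h1 : b ≤ b1) (hc : 0 ≤ c) :
    gaussQ (Real.sqrt 2 * b) - gaussQ (Real.sqrt 2 * b + c) ≤ gaussQ b * gaussQ (-c) := by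
  refine key_of (hb0.trans h0) hc1 ?_ ?_ hc
  · have e1 := exp_neg_le (x := X) (y := 0.3272 * b + 0.31 * b ^ 2) 6 (by rw [hX]; positivity)
      (by rw [hX]; nlinarith)
    have e2 := exp_neg_le (x := Y) (y := 0.79 * c1 + 0.31 * c1 ^ 2) 6 (by rw [hY]; positivity)
      (by rw [hY])
    linarith
  · by_contra hcon
    push Not at hcon
    rcases eq_or_lt_of_le (h0.trans h1) with he | hlt
    · have : b = b0 := by linarith
      subst this; linarith
    have k1 := mul_nonneg (sub_nonneg.mpr h0) (sub_nonneg.mpr h1)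
    have k2 := mul_nonneg (sub_nonneg.mpr h0) (sub_nonneg.mpr hB1)
    have k3 := mul_nonneg (sub_nonneg.mpr h1) (sub_nonneg.mpr hB0)
    have k4 := mul_pos (sub_pos.mpr hlt) (sub_pos.mpr hcon)
    have k5 := mul_nonneg k1 (sub_pos.mpr hlt).le
    linarith

lemma key_small {b c : ℝ} (hb : 0 < b) (h1 : b ≤ 1 / 3) (hc : 0 ≤ c) :
    gaussQ (Real.sqrt 2 * b) - gaussQ (Real.sqrt 2 * b + c) ≤ gaussQ b * gaussQ (-c) := by
  obtain ⟨t, ht⟩ : ∃ t, t = 0.48 / b := ⟨_, rfl⟩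
  have htb : b * t = 0.48 := by rw [ht]; field_simp
  have ht0 : 1.44 ≤ t := by
    rw [ht, le_div_iff₀ hb]; linarith
  refine key_of (c1 := t) hb.le (by linarith) ?_ ?_ hc
  · have e1 : Real.exp (-(0.3272 * b + 0.31 * b ^ 2)) ≤ 1 - 0.32 * b := by
      have h := exp_neg_le (x := 0.3272 * b + 0.31 * b ^ 2) 1 (by positivity) le_rfl
      refine h.trans ?_
      simp only [Finset.sum_range_succ, Finset.sum_range_zero, Nat.factorial]
      norm_num
      rw [inv_le_iff_one_le_mul₀ (by positivity)]
      nlinarith [mul_pos hb hb, mul_nonneg (mul_pos hb hb).le (sub_nonneg.mpr h1)]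
    have e2 : Real.exp (-(0.79 * t + 0.31 * t ^ 2)) ≤ 0.64 * b := by
      have h178 : (5.5:ℝ) ≤ Real.exp 1.78 := by
        have := Real.sum_le_exp_of_nonneg (x := 1.78) (by norm_num) 7
        refine le_trans ?_ this
        simp only [Finset.sum_range_succ, Finset.sum_range_zero, Nat.factorial]
        norm_num
      have hz : 0 ≤ 0.79 * t + 0.31 * t ^ 2 - 1.78 := by nlinarith
      have hE : 5.5 * (0.79 * t + 0.31 * t ^ 2 - 0.78) ≤ Real.exp (0.79 * t + 0.31 * t ^ 2) := by
        have e : Real.exp (0.79 * t + 0.31 * t ^ 2) =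
          Real.exp 1.78 * Real.exp (0.79 * t + 0.31 * t ^ 2 - 1.78) := by
          rw [← Real.exp_add]; congr 1; ring
        rw [e]
        have := Real.add_one_le_exp (0.79 * t + 0.31 * t ^ 2 - 1.78)
        apply mul_le_mul h178 (by linarith) (by linarith) (Real.exp_pos _).le
      rw [Real.exp_neg, inv_le_iff_one_le_mul₀ (Real.exp_pos _)]
      have h3 : 3.2553 * t ≤ Real.exp (0.79 * t + 0.31 * t ^ 2) := by nlinarith
      have h4 := mul_le_mul_of_nonneg_left h3 hb.le
      nlinarith
    linarith
  · rw [htb]; nlinarith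

lemma key_large {b c : ℝ} (h1 : 1.1 ≤ b) (hc : 0 ≤ c) :
    gaussQ (Real.sqrt 2 * b) - gaussQ (Real.sqrt 2 * b + c) ≤ gaussQ b * gaussQ (-c) := by
  have h2 := gaussQ_sqrt_two (b := b) (by linarith)
  have h3 : gaussQ 0 ≤ gaussQ (-c) := gaussQ_strictAnti.antitone (by linarith)
  rw [gaussQ_zero] at h3
  have h4 := gaussQ_pos (Real.sqrt 2 * b + c)
  have h5 : Real.exp (-(0.3272 * b + 0.31 * b ^ 2)) ≤ 1 / 2 := by
    have h := exp_neg_le (x := 0.73) (y := 0.3272 * b + 0.31 * b ^ 2) 3 (by norm_num) (by nlinarith)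
    refine h.trans ?_
    simp only [Finset.sum_range_succ, Finset.sum_range_zero, Nat.factorial]
    norm_num
  have := mul_le_mul_of_nonneg_left (h5.trans h3) (gaussQ_pos b).le
  linarith

lemma key {b c : ℝ} (hb : 0 < b) (hc : 0 ≤ c) :
    gaussQ (Real.sqrt 2 * b) - gaussQ (Real.sqrt 2 * b + c) ≤ gaussQ b * gaussQ (-c) := by
  rcases le_total b (1 / 3) with h1 | h1
  · exact key_small hb h1 hc
  rcases le_total b 0.55 with h2 | h2
  · refine key_step (1 / 3) 0.55 1.17 _ _ (by norm_num) (by norm_num) rfl rfl ?_ (by norm_num)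
      (by norm_num) h1 h2 hc
    simp only [Finset.sum_range_succ, Finset.sum_range_zero, Nat.factorial]
    norm_num
  rcases le_total b 0.84 with h3 | h3
  · refine key_step 0.55 0.84 0.73 _ _ (by norm_num) (by norm_num) rfl rfl ?_ (by norm_num)
      (by norm_num) h2 h3 hc
    simp only [Finset.sum_range_succ, Finset.sum_range_zero, Nat.factorial]
    norm_num
  rcases le_total b 1.1 with h4 | h4
  · refine key_step 0.84 1.1 0.35 _ _ (by norm_num) (by norm_num) rfl rfl ?_ (by norm_num)
      (by norm_num) h3 h4 hc
    simp only [Finset.sum_range_succ, Finset.sum_range_zero, Nat.factorial]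
    norm_num
  exact key_large h4 hc

theorem stmt_6 (μ₁ μ₂ ε : ℝ) (h₁ : 0 < μ₁) (h₂ : 0 < μ₂) (hε0 : 0 < ε)
    (hε : ε < min μ₁ μ₂) (E : ℝ) (hE : 0 < E) :
    (((gaussianReal (μ₁ * Real.sqrt E) 1).prod (gaussianReal (μ₂ * Real.sqrt E) 1))
        {z : ℝ × ℝ | z.1 + z.2 > 0 ∧ z.1 > 0 ∧ z.2 < 0}).toReal ≥
      (1 - gaussQ (ε * Real.sqrt (2 * E))) *
        (gaussQ (μ₂ * Real.sqrt (2 * E)) - gaussQ ((μ₂ + μ₁ - ε) * Real.sqrt (2 * E))) := by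
  have hs : 0 < Real.sqrt E := Real.sqrt_pos.mpr hE
  have hsE : Real.sqrt (2 * E) = Real.sqrt 2 * Real.sqrt E := Real.sqrt_mul (by norm_num) E
  have hs2 : 0 < Real.sqrt 2 := by positivity
  have hsq : Real.sqrt 2 ^ 2 = 2 := Real.sq_sqrt (by norm_num)
  have hε1 : ε < μ₁ := hε.trans_le (min_le_left _ _)
  have hL := lhs_bound (μ₁ * Real.sqrt E) (μ₂ * Real.sqrt E) (by positivity)
  have hM := gaussPhi_mid (ε * Real.sqrt (2 * E)) ((μ₁ - ε) * Real.sqrt (2 * E))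
  have hK := key (b := μ₂ * Real.sqrt E) (c := (μ₁ - ε) * Real.sqrt (2 * E)) (by positivity)
    (mul_nonneg (by linarith) (Real.sqrt_nonneg _))
  have e1 : (ε * Real.sqrt (2 * E) + (μ₁ - ε) * Real.sqrt (2 * E)) / 2 =
      μ₁ * Real.sqrt E / Real.sqrt 2 := by
    rw [hsE]; field_simp
    linear_combination (μ₁) * hsq
  have e2 : Real.sqrt 2 * (μ₂ * Real.sqrt E) = μ₂ * Real.sqrt (2 * E) := by rw [hsE]; ring
  have e3 : μ₂ * Real.sqrt (2 * E) + (μ₁ - ε) * Real.sqrt (2 * E) =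
      (μ₂ + μ₁ - ε) * Real.sqrt (2 * E) := by ring
  rw [e1] at hM
  rw [e2, e3] at hK
  rw [← gaussQ_neg]
  have hp := gaussQ_pos (-(ε * Real.sqrt (2 * E)))
  have hq := gaussQ_pos (μ₂ * Real.sqrt E)
  have k1 := mul_le_mul_of_nonneg_left hM hq.le
  have k2 := mul_le_mul_of_nonneg_left hK hp.le
  refine ge_iff_le.mpr (le_trans ?_ hL)
  linarith
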